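/- Let (G,c,o) be a recurrent rooted network and h a potential on it. Let μ_h be the measure on the neighbors of o defined by μ_h(v)=c_{ov}h(v) for v∼o. Then for every v ∈ S_h={u : h(u)>0}, the Green kernel of the h-process satisfies G^h(μ_h, v) := Σ_x μ_h(x) G^h(x,v) = h(v) · c_v. -/

import Mathlib

open scoped ENNReal
open Filter Topology Classical
noncomputable section

/-- A rooted network: a connected, locally finite simple graph with positive
symmetric edge conductances (extended by `0` to non-edges) and a root `o`. -/
structure RootedNetwork (V : Type*) where
  G : SimpleGraph V
  locallyFinite : ∀ x : V, (G.neighborSet x).Finite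
  connected : G.Connected
  c : V → V → ℝ
  c_symm : ∀ x y, c x y = c y x
  c_pos : ∀ x y, G.Adj x y → 0 < c x y
  c_eq_zero : ∀ x y, ¬ G.Adj x y → c x y = 0
  o : V

namespace RootedNetwork

variable {V : Type*}

/-- The vertex weight `c_x = Σ_{z ∼ x} c_{xz}`. -/
noncomputable def cv (N : RootedNetwork V) (x : V) : ℝ := ∑' y, N.c x y

/-- The transition probability `p(x,y) = c_{xy} / c_x` of the network random walk. -/
noncomputable def p (N : RootedNetwork V) (x y : V) : ℝ≥0∞ :=
  ENNReal.ofReal (N.c x y / N.cv x)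

/-- The probability that the network random walk started at `x` begins with the
given finite sequence of steps. -/
noncomputable def pathProb (N : RootedNetwork V) : V → List V → ℝ≥0∞
  | _, [] => 1
  | x, y :: l => N.p x y * pathProb N y l

/-- The probability, starting from `x`, that the walk ever visits `b`
(`P_x(τ_b < ∞)`), computed by decomposing over the finite path up to the first
visit of `b`. -/
noncomputable def hitProb (N : RootedNetwork V) (x b : V) : ℝ≥0∞ :=
  if x = b then 1
  else ∑' l : {l : List V // l.getLast? = some b ∧ b ∉ l.dropLast}, N.pathProb x l.1

/-- A rooted network is recurrent if the walk started from any vertex almost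
surely visits the root `o`. -/
def Recurrent (N : RootedNetwork V) : Prop := ∀ x : V, N.hitProb x N.o = 1

/-- The Green kernel `G_o(x,y) = Σ_{n ≥ 0} P_x(X_n = y, τ_o > n)` of the walk
killed at the root, computed as a sum over finite paths from `x` to `y`
avoiding `o` (the `n = 0` term is the first summand). -/
noncomputable def GreenKer (N : RootedNetwork V) (x y : V) : ℝ≥0∞ :=
  (if x = y ∧ x ≠ N.o then 1 else 0) +
    ∑' l : {l : List V // l.getLast? = some y ∧ N.o ∉ x :: l}, N.pathProb x l.1

/-- The Green density `g_o(x,y) = G_o(x,y) / c_y`. -/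
noncomputable def greenDensity (N : RootedNetwork V) (x y : V) : ℝ≥0∞ :=
  N.GreenKer x y / ENNReal.ofReal (N.cv y)

/-- The network Laplacian `Δ f (v) = Σ_{x ∼ v} c_{vx} (f(x) - f(v))`. -/
noncomputable def lap (N : RootedNetwork V) (f : V → ℝ) (v : V) : ℝ :=
  ∑' x, N.c v x * (f x - f v)

/-- A potential: a nonnegative function vanishing at `o`, with Laplacian `1`
at `o`, harmonic everywhere else. -/
def IsPotential (N : RootedNetwork V) (h : V → ℝ) : Prop :=
  (∀ v, 0 ≤ h v) ∧ h N.o = 0 ∧ N.lap h N.o = 1 ∧ ∀ v, v ≠ N.o → N.lap h v = 0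

end RootedNetwork
namespace RootedNetwork

variable {V : Type*}

/-- The transition probability `p^h(x,y) = p(x,y) h(y) / h(x)` of the Doob
`h`-process. -/
noncomputable def hp (N : RootedNetwork V) (h : V → ℝ) (x y : V) : ℝ≥0∞ :=
  N.p x y * ENNReal.ofReal (h y / h x)

/-- The probability that the `h`-process started at `x` begins with the given
finite sequence of steps. -/
noncomputable def hPathProb (N : RootedNetwork V) (h : V → ℝ) : V → List V → ℝ≥0∞
  | _, [] => 1
  | x, y :: l => N.hp h x y * hPathProb N h y l

end RootedNetwork
namespace RootedNetwork

/-- The Green kernel `G^h(x,y) = Σ_{k ≥ 0} P^h_x(Y_k = y)` of the `h`-process,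
as a sum over finite paths from `x` to `y` (the `k = 0` term is the first
summand). -/
noncomputable def hGreen {V : Type*} (N : RootedNetwork V) (h : V → ℝ) (x y : V) : ℝ≥0∞ :=
  (if x = y then 1 else 0) +
    ∑' l : {l : List V // l.getLast? = some y}, N.hPathProb h x l.1

end RootedNetwork

namespace RootedNetwork

variable {V : Type*}

lemma c_nonneg (N : RootedNetwork V) (x y : V) : 0 ≤ N.c x y := by
  by_cases hxy : N.G.Adj x y
  · exact (N.c_pos x y hxy).le
  · exact (N.c_eq_zero x y hxy).ge

lemma c_fin (N : RootedNetwork V) (x : V) (f : V → ℝ) :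
    Summable (fun y => N.c x y * f y) := by
  apply summable_of_hasFiniteSupport
  apply (N.locallyFinite x).subset
  intro y hy
  by_contra hn
  apply hy
  simp [N.c_eq_zero x y hn]

lemma cv_nonneg (N : RootedNetwork V) (x : V) : 0 ≤ N.cv x :=
  tsum_nonneg (N.c_nonneg x)

lemma c_le_cv (N : RootedNetwork V) (x y : V) : N.c x y ≤ N.cv x := by
  have hs : Summable (N.c x) := by simpa using N.c_fin x (fun _ => 1)
  exact hs.le_tsum y (fun z _ => N.c_nonneg x z)

lemma cv_mul_p (N : RootedNetwork V) (x y : V) :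
    ENNReal.ofReal (N.cv x) * N.p x y = ENNReal.ofReal (N.c x y) := by
  rw [p, ← ENNReal.ofReal_mul (N.cv_nonneg x)]
  congr 1
  by_cases h0 : N.cv x = 0
  · have h1 := N.c_le_cv x y
    have h2 := N.c_nonneg x y
    rw [h0] at h1 ⊢
    linarith
  · field_simp

lemma pathProb_append (N : RootedNetwork V) (x y z : V) (k : List V) :
    N.pathProb x (k ++ [y] ++ [z]) = N.pathProb x (k ++ [y]) * N.p y z := by
  induction k generalizing x with
  | nil => simp [pathProb]
  | cons a k ih =>
    have := ih a
    simp only [List.cons_append, pathProb] at this ⊢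
    rw [this, mul_assoc]

lemma pathProb_rev (N : RootedNetwork V) (x y : V) (k : List V) :
    ENNReal.ofReal (N.cv x) * N.pathProb x (k ++ [y])
      = ENNReal.ofReal (N.cv y) * N.pathProb y (k.reverse ++ [x]) := by
  induction k generalizing x with
  | nil => simp [pathProb, cv_mul_p, N.c_symm x y]
  | cons a k ih =>
    rw [List.reverse_cons, pathProb_append, ← mul_assoc, ← ih a, List.cons_append, pathProb,
      ← mul_assoc, cv_mul_p, N.c_symm x a, ← cv_mul_p]
    ring

lemma hPathProb_eq (N : RootedNetwork V) (h : V → ℝ) (hn : ∀ v, 0 ≤ h v) (x y : V)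
    (hx : 0 < h x) (k : List V) :
    ENNReal.ofReal (h x) * N.hPathProb h x (k ++ [y])
      = ENNReal.ofReal (h y) * (if ∀ z ∈ k, 0 < h z then N.pathProb x (k ++ [y]) else 0) := by
  have key : ∀ a, ENNReal.ofReal (h x) * N.hp h x a = ENNReal.ofReal (h a) * N.p x a := by
    intro a
    rw [hp, mul_left_comm, ← ENNReal.ofReal_mul hx.le, mul_div_cancel₀ _ hx.ne', mul_comm]
  induction k generalizing x with
  | nil => simp [pathProb, hPathProb, key]
  | cons a k ih =>
    rw [List.cons_append, hPathProb, pathProb, ← mul_assoc, key]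
    by_cases ha : 0 < h a
    · have := ih a ha (fun b => by
        rw [hp, mul_left_comm, ← ENNReal.ofReal_mul ha.le, mul_div_cancel₀ _ ha.ne', mul_comm])
      rw [mul_right_comm, this]
      by_cases hk : ∀ z ∈ k, 0 < h z
      · simp [ha, hk]; ring
      · simp [ha, hk]
    · have h0 : h a = 0 := le_antisymm (not_lt.1 ha) (hn a)
      simp [h0]

lemma pos_step (N : RootedNetwork V) (h : V → ℝ) (hpot : N.IsPotential h) (x z : V)
    (hx : 0 < h x) (hz : z ≠ N.o) (hp : N.p x z ≠ 0) : 0 < h z := by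
  obtain ⟨hn, -, -, hh⟩ := hpot
  by_contra hc
  have h0 : h z = 0 := le_antisymm (not_lt.1 hc) (hn z)
  have hl := hh z hz
  simp only [lap, h0, sub_zero] at hl
  have h1 := (N.c_fin z h).le_tsum x (fun y _ => mul_nonneg (N.c_nonneg z y) (hn y))
  rw [hl] at h1
  have h2 : N.c z x = 0 := by
    have := N.c_nonneg z x
    nlinarith
  apply hp
  simp [p, N.c_symm x z, h2]

lemma pos_path (N : RootedNetwork V) (h : V → ℝ) (hpot : N.IsPotential h) (x y : V)
    (hx : 0 < h x) (k : List V) (hk : N.o ∉ k) (hne : N.pathProb x (k ++ [y]) ≠ 0) :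
    ∀ z ∈ k, 0 < h z := by
  induction k generalizing x with
  | nil => simp
  | cons a k ih =>
    rw [List.cons_append, pathProb] at hne
    have h1 := left_ne_zero_of_mul hne
    have h2 := right_ne_zero_of_mul hne
    simp only [List.mem_cons, not_or] at hk
    have ha := N.pos_step h hpot x a hx (Ne.symm hk.1) h1
    have := ih a ha hk.2 h2
    simpa [ha] using this

/-- Lists with last element `v`. -/
def snocEquiv (v : V) : List V ≃ {l : List V // l.getLast? = some v} where
  toFun k := ⟨k ++ [v], by simp⟩
  invFun l := l.1.dropLast
  left_inv k := by simp
  right_inv l := by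
    obtain ⟨l, hl⟩ := l
    apply Subtype.ext
    exact List.dropLast_append_getLast? v hl

/-- Lists hitting `b` only at the end. -/
def snocEquiv' (b : V) : {k : List V // b ∉ k} ≃
    {l : List V // l.getLast? = some b ∧ b ∉ l.dropLast} where
  toFun k := ⟨k.1 ++ [b], by simpa using k.2⟩
  invFun l := ⟨l.1.dropLast, l.2.2⟩
  left_inv k := by simp
  right_inv l := by
    obtain ⟨l, hl⟩ := l
    apply Subtype.ext
    exact List.dropLast_append_getLast? b hl.1

/-- Cons decomposition. -/
def consEquiv : Option (V × List V) ≃ List V where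
  toFun a := match a with
    | none => []
    | some (x, k) => x :: k
  invFun l := match l with
    | [] => none
    | x :: k => some (x, k)
  left_inv a := by rcases a with _ | ⟨x, k⟩ <;> rfl
  right_inv l := by cases l <;> rfl

lemma tsum_list (F : List V → ℝ≥0∞) :
    ∑' k, F k = F [] + ∑' x, ∑' k, F (x :: k) := by
  rw [← consEquiv.tsum_eq F, ← (Equiv.optionEquivSumPUnit.{0} (V × List V)).symm.tsum_eq,
    Summable.tsum_sum ENNReal.summable ENNReal.summable, ← ENNReal.tsum_prod, add_comm]
  congr 1
  simp [consEquiv]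

end RootedNetwork

open RootedNetwork in
theorem hGreen_main {V : Type*} (N : RootedNetwork V)
    (hrec : N.Recurrent) (h : V → ℝ) (hpot : N.IsPotential h)
    (v : V) (hv : 0 < h v) :
    (∑' x : V, ENNReal.ofReal (N.c N.o x * h x) * N.hGreen h x v)
      = ENNReal.ofReal (h v * N.cv v) := by
  have hn := hpot.1
  have ho : h N.o = 0 := hpot.2.1
  have hvo : v ≠ N.o := by rintro rfl; exact hv.ne' ho
  -- the common weight
  let F : List V → ℝ≥0∞ := fun k =>
    ENNReal.ofReal (h v) * (ENNReal.ofReal (N.cv N.o) *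
      (if ∀ z ∈ k, 0 < h z then N.pathProb N.o (k ++ [v]) else 0))
  have hL : (∑' x : V, ENNReal.ofReal (N.c N.o x * h x) * N.hGreen h x v) = ∑' k, F k := by
    rw [tsum_list]
    simp only [hGreen, mul_add]
    rw [ENNReal.tsum_add]
    congr 1
    · rw [tsum_eq_single v]
      · simp only [if_true, mul_one, F, List.nil_append, pathProb, cv_mul_p]
        rw [ENNReal.ofReal_mul (N.c_nonneg _ _), mul_comm]
        simp
        rw [cv_mul_p]
      · intro x hx
        simp [hx]
    · congr 1
      ext x
      rw [← (snocEquiv v).tsum_eq, ← ENNReal.tsum_mul_left]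
      congr 1
      ext k
      change ENNReal.ofReal (N.c N.o x * h x) * N.hPathProb h x (k ++ [v]) = F (x :: k)
      rw [ENNReal.ofReal_mul (N.c_nonneg _ _), mul_assoc]
      by_cases hx : 0 < h x
      · rw [hPathProb_eq N h hn x v hx, ← cv_mul_p]
        by_cases hk : ∀ z ∈ k, 0 < h z
        · simp [F, hx, hk, pathProb]; ring
        · simp [F, hx, hk]
      · have h0 : h x = 0 := le_antisymm (not_lt.1 hx) (hn x)
        simp [F, h0]
  have hR : N.hitProb v N.o = ∑' k : List V,
      (if N.o ∉ k then N.pathProb v (k ++ [N.o]) else 0) := by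
    rw [hitProb, if_neg hvo, ← (snocEquiv' N.o).tsum_eq]
    change (∑' k : {k : List V | N.o ∉ k}, N.pathProb v (k.1 ++ [N.o])) = _
    rw [tsum_subtype {k : List V | N.o ∉ k} (fun k => N.pathProb v (k ++ [N.o]))]
    refine tsum_congr fun k => ?_
    by_cases hk : N.o ∈ k <;> simp [hk]
  have hr := hrec v
  rw [hR] at hr
  rw [hL, ENNReal.ofReal_mul hv.le, ← mul_one (ENNReal.ofReal (N.cv v)), ← hr,
    ← ENNReal.tsum_mul_left, ← ENNReal.tsum_mul_left]
  let e : List V ≃ List V := ⟨List.reverse, List.reverse, List.reverse_reverse, List.reverse_reverse⟩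
  rw [← e.tsum_eq]
  congr 1
  ext k
  change F k.reverse = _
  simp only [F]
  congr 1
  have hrv := N.pathProb_rev v N.o k
  by_cases hk : ∀ z ∈ k, 0 < h z
  · have hok : N.o ∉ k := fun hm => (hk _ hm).ne' ho
    have hk' : ∀ z ∈ k.reverse, 0 < h z := fun z hz => hk z (List.mem_reverse.1 hz)
    rw [if_pos hk', if_pos hok, hrv]
  · by_cases hok : N.o ∈ k
    · simp [hk, hok]
    · have : N.pathProb v (k ++ [N.o]) = 0 := by
        by_contra hc
        exact hk (N.pos_path h hpot v N.o hv k hok hc)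
      simp [hk, this]

/-- On a recurrent rooted network with potential `h`, for the initial measure
`μ_h(x) = c_{ox} h(x)` on the neighbors of `o` one has
`G^h(μ_h, v) = Σ_x μ_h(x) G^h(x,v) = h(v) · c_v` for every `v ∈ S_h`. -/
theorem hGreen_mu_eq {V : Type*} (N : RootedNetwork V)
    (hrec : N.Recurrent) (h : V → ℝ) (hpot : N.IsPotential h)
    (v : V) (hv : 0 < h v) :
    (∑' x : V, ENNReal.ofReal (N.c N.o x * h x) * N.hGreen h x v)
      = ENNReal.ofReal (h v * N.cv v) := hGreen_main N hrec h hpot v hv
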